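/- arXiv:1701.00768 — 4 statements merged into one kernel-verified Lean document; each statement's English description precedes it below -/
import Mathlib

section
/- Let K be a field of characteristic p > 0 and G a group. Then the group algebra KG is a principal ideal ring if and only if there exists a finite normal subgroup N of G whose order is not divisible by p, such that the quotient G/N is either a finite cyclic p-group or infinite cyclic (isomorphic to ℤ). -/
/-!
Principal ideal group algebras in characteristic `p`.

*Sufficiency.* If `N` is finite of order invertible in `K` and `G ⧸ N` is cyclic, generated by the
class of `t`, then `R = KN` is semisimple and every element of `KG` becomes, after multiplication by
a power of the unit `t⁻¹`, a polynomial in `t⁻¹` with coefficients in `R`, with `t` normalising `R`.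
Over a semisimple `R` the leading coefficients occurring in a left ideal can be realised by a single
element, and division with remainder shows that this element generates
(`isPrincipalIdealRing_of_skewLaurent`). This does not need `G ⧸ N` to be infinite or a `p`-group.

*Necessity.* Let `α` generate the augmentation ideal `Δ` of `KG`. Modulo the commutator subgroup the
support of `α` generates `G`, so the abelianization is finitely generated: either `G` maps onto `ℤ` or
its abelianization is finite. Both cases rest on the same two facts.

* An idempotent two-sided ideal that is stable under the involution `g ↦ g⁻¹` and principal as a left
  ideal has a left identity `f` (`exists_left_identity`); the argument needs only that `KG` is left
  noetherian.
* If `f` is a left identity of an ideal `J` contained in `Δ`, then `1 - f` has augmentation `1` and is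
  fixed under right translation by the subgroup of all `g` with `g - 1 ∈ J`; so that subgroup is
  finite of order invertible in `K` (`finite_of_mul_eq_self`).

If `φ` maps `G` onto `ℤ`, take for `J` the kernel of `KG → K[ℤ]`; its idempotency comes from the fact
that `K[ℤ]` is a domain (`finite_ker_of_surjective`). If the abelianization is finite, take for `J` the
stable value of the powers `Δⁿ = KG αⁿ`. Here `KG / Δⁿ` is spanned by the powers of `α`, hence is
commutative, so `Δⁿ` contains the kernel of `KG → K[G/G']`, and the powers stabilise because
`K[G/G']` is artinian. The resulting quotient of `G` is a finite abelian `p`-group `P` with `KP` a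
principal ideal ring; comparing `dim KP = |P|` with the nilpotency degree of `α` in `KP`, which is at
most the exponent of `P`, shows that `P` is cyclic (`isCyclic_of_isPGroup`).
-/

/-! ### Left ideals of skew Laurent extensions of semisimple rings -/

section SkewLaurent

variable {R S : Type*} [Ring R] [Ring S]

/-- `tailSpan ψ y m` is `R y + R y² + ⋯ + R yᵐ` inside `S`, where `R` acts through `ψ`. -/
def tailSpan (ψ : R →+* S) (y : S) (m : ℕ) : AddSubgroup S :=
  AddSubgroup.closure {s | ∃ r, ∃ i < m, s = ψ r * y ^ (i + 1)}

lemma tailSpan_zero (ψ : R →+* S) (y : S) : tailSpan ψ y 0 = ⊥ := by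
  rw [tailSpan, AddSubgroup.closure_eq_bot_iff]
  rintro s ⟨r, i, hi, -⟩
  omega

lemma tailSpan_mono (ψ : R →+* S) (y : S) {m n : ℕ} (h : m ≤ n) :
    tailSpan ψ y m ≤ tailSpan ψ y n := by
  apply AddSubgroup.closure_mono
  rintro s ⟨r, i, hi, rfl⟩
  exact ⟨r, i, by omega, rfl⟩

lemma map_mul_mem_tailSpan (ψ : R →+* S) (y : S) {m : ℕ} (c : R) {s : S}
    (hs : s ∈ tailSpan ψ y m) : ψ c * s ∈ tailSpan ψ y m := by
  induction hs using AddSubgroup.closure_induction with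
  | mem x hx =>
    obtain ⟨r, i, hi, rfl⟩ := hx
    exact AddSubgroup.subset_closure ⟨c * r, i, hi, by rw [map_mul, mul_assoc]⟩
  | zero => simp
  | add a b _ _ ha hb => rw [mul_add]; exact add_mem ha hb
  | neg a _ ha => rw [mul_neg]; exact neg_mem ha

lemma mul_mem_tailSpan {ψ : R →+* S} {y : S} (hy : ∀ r, ∃ r', y * ψ r = ψ r' * y) {m : ℕ}
    {s : S} (hs : s ∈ tailSpan ψ y m) : y * s ∈ tailSpan ψ y (m + 1) := by
  induction hs using AddSubgroup.closure_induction with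
  | mem x hx =>
    obtain ⟨r, i, hi, rfl⟩ := hx
    obtain ⟨r', hr'⟩ := hy r
    exact AddSubgroup.subset_closure ⟨r', i + 1, by omega, by
      rw [← mul_assoc, hr', mul_assoc, ← pow_succ']⟩
  | zero => simp
  | add a b _ _ ha hb => rw [mul_add]; exact add_mem ha hb
  | neg a _ ha => rw [mul_neg]; exact neg_mem ha

lemma exists_sub_mem_tailSpan_of_mul {ψ : R →+* S} {x y : S}
    (hx : ∀ r, ∃ r', x * ψ r = ψ r' * x) (hxy : x * y = 1) {m : ℕ}
    {s : S} (hs : s ∈ tailSpan ψ y (m + 1)) : ∃ c, x * s - ψ c ∈ tailSpan ψ y m := by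
  induction hs using AddSubgroup.closure_induction with
  | mem z hz =>
    obtain ⟨r, i, hi, rfl⟩ := hz
    obtain ⟨r', hr'⟩ := hx r
    have e : x * (ψ r * y ^ (i + 1)) = ψ r' * y ^ i := by
      rw [← mul_assoc, hr', mul_assoc, pow_succ', ← mul_assoc x, hxy, one_mul]
    rw [e]
    cases i with
    | zero => exact ⟨r', by simp⟩
    | succ i => exact ⟨0, by
        rw [map_zero, sub_zero]; exact AddSubgroup.subset_closure ⟨r', i, by omega, rfl⟩⟩
  | zero => exact ⟨0, by simp⟩
  | add a b _ _ ha hb =>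
    obtain ⟨c, hc⟩ := ha
    obtain ⟨d, hd⟩ := hb
    refine ⟨c + d, ?_⟩
    have := add_mem hc hd
    rwa [show x * (a + b) - ψ (c + d) = x * a - ψ c + (x * b - ψ d) by
      rw [map_add, mul_add]; abel]
  | neg a _ ha =>
    obtain ⟨c, hc⟩ := ha
    refine ⟨-c, ?_⟩
    have := neg_mem hc
    rwa [show x * -a - ψ (-c) = -(x * a - ψ c) by rw [map_neg, mul_neg]; abel]

/-- The left ideal of leading coefficients at `y⁰` of those elements of the left ideal `I`
that lie in `R + R y + ⋯ + R yᵐ`. The expansion of an element in powers of `y` need not be unique;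
a coefficient is counted as soon as some expansion exhibits it. -/
def leadIdeal (ψ : R →+* S) (y : S) (I : Ideal S) (m : ℕ) : Ideal R where
  carrier := {c | ∃ h ∈ I, h - ψ c ∈ tailSpan ψ y m}
  zero_mem' := ⟨0, I.zero_mem, by simp⟩
  add_mem' := by
    rintro a b ⟨h, hI, hh⟩ ⟨k, kI, hk⟩
    refine ⟨h + k, I.add_mem hI kI, ?_⟩
    rw [show h + k - ψ (a + b) = h - ψ a + (k - ψ b) by rw [map_add]; abel]
    exact add_mem hh hk
  smul_mem' := by
    rintro c a ⟨h, hI, hh⟩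
    refine ⟨ψ c * h, I.mul_mem_left _ hI, ?_⟩
    rw [smul_eq_mul, map_mul, ← mul_sub]
    exact map_mul_mem_tailSpan ψ y c hh

lemma leadIdeal_mono (ψ : R →+* S) (y : S) (I : Ideal S) : Monotone (leadIdeal ψ y I) := by
  rintro m n hmn c ⟨h, hI, hh⟩
  exact ⟨h, hI, tailSpan_mono ψ y hmn hh⟩

lemma exists_right_identity [IsSemisimpleRing R] (L : Ideal R) :
    ∃ e ∈ L, ∀ c ∈ L, c * e = c := by
  obtain ⟨L', hL⟩ := exists_isCompl L
  obtain ⟨e, he, f, hf, h⟩ := Submodule.mem_sup.1 (hL.sup_eq_top ▸ Submodule.mem_top (x := (1 : R)))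
  refine ⟨e, he, fun c hc => ?_⟩
  have h1 : c * e + c * f = c := by rw [← mul_add, h, mul_one]
  have h2 : c * f ∈ L := by
    rw [← eq_sub_iff_add_eq'] at h1
    rw [h1]; exact L.sub_mem hc (L.mul_mem_left _ he)
  have h3 := Submodule.disjoint_def.1 hL.disjoint _ h2 (L'.mul_mem_left _ hf)
  rwa [h3, add_zero] at h1

/-- One element of `I` realises all the leading coefficient ideals of index at most `n` at once:
idempotent generators of successive complements are glued together. -/
lemma exists_simultaneous_lead [IsSemisimpleRing R] (ψ : R →+* S) (y : S) (I : Ideal S) (n : ℕ) :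
    ∃ g ∈ I, ∀ m ≤ n, ∀ c ∈ leadIdeal ψ y I m, ψ c * g - ψ c ∈ tailSpan ψ y m := by
  induction n with
  | zero =>
    obtain ⟨e, ⟨h, hI, hh⟩, he⟩ := exists_right_identity (leadIdeal ψ y I 0)
    refine ⟨h, hI, fun m hm c hc => ?_⟩
    obtain rfl : m = 0 := by omega
    have := map_mul_mem_tailSpan ψ y c hh
    rwa [mul_sub, ← map_mul, he c hc] at this
  | succ n ih =>
    obtain ⟨g, gI, hg⟩ := ih
    obtain ⟨e, heL, he⟩ := exists_right_identity (leadIdeal ψ y I n)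
    obtain ⟨f, hfL, hf⟩ := exists_right_identity (leadIdeal ψ y I (n + 1))
    -- `f - f * e` generates a complement of the `n`-th ideal in the next one.
    have hd : f - f * e ∈ leadIdeal ψ y I (n + 1) :=
      sub_mem hfL (leadIdeal_mono ψ y I n.le_succ (Ideal.mul_mem_left _ _ heL))
    obtain ⟨h, hI, hh⟩ := hd
    have key : ∀ c, c * f = c → ψ c * (ψ e * g + ψ (f - f * e) * h) - ψ c
        = (ψ (c * e) * g - ψ (c * e)) + ψ (c - c * e) * (h - ψ (f - f * e))
          + ψ ((c - c * e) * (f - f * e) - (c - c * e)) := by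
      intro c hc
      have : c * (f - f * e) = c - c * e := by rw [mul_sub, ← mul_assoc, hc]
      rw [mul_add, ← mul_assoc, ← mul_assoc, ← map_mul, ← map_mul, this]
      simp only [map_sub, map_mul, mul_sub, sub_mul]
      abel
    have hee : e * e = e := he e heL
    have hef : e * f = e := hf e (leadIdeal_mono ψ y I n.le_succ heL)
    have key2 : ∀ c, c * f = c → (c - c * e) * (f - f * e) - (c - c * e) = 0 := by
      intro c hc
      have h1 : (c - c * e) * f = c - c * e := by rw [sub_mul, mul_assoc, hef, hc]
      have h2 : (c - c * e) * e = 0 := by rw [sub_mul, mul_assoc, hee, sub_self]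
      rw [mul_sub, ← mul_assoc, h1, h2, sub_zero, sub_self]
    refine ⟨ψ e * g + ψ (f - f * e) * h, I.add_mem (I.mul_mem_left _ gI) (I.mul_mem_left _ hI),
      fun m hm c hc => ?_⟩
    have hcf := hf c (leadIdeal_mono ψ y I hm hc)
    rw [key c hcf, key2 c hcf, map_zero, add_zero]
    rcases Nat.lt_or_ge n m with hnm | hnm
    · obtain rfl : m = n + 1 := by omega
      exact add_mem (tailSpan_mono ψ y n.le_succ (hg n le_rfl _ (Ideal.mul_mem_left _ _ heL)))
        (map_mul_mem_tailSpan ψ y _ hh)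
    · have hce := he c (leadIdeal_mono ψ y I hnm hc)
      rw [hce, sub_self, map_zero, zero_mul, add_zero]
      exact hg m hnm c hc

/-- A ring generated by a semisimple ring `R` and a unit `x` normalising `R` is a principal left
ideal ring. -/
theorem isPrincipalIdealRing_of_skewLaurent [IsSemisimpleRing R] (ψ : R →+* S) (x y : S)
    (hxy : x * y = 1) (hyx : y * x = 1) (hx : ∀ r, ∃ r', x * ψ r = ψ r' * x)
    (hgen : ∀ s, ∃ n m : ℕ, ∃ c, y ^ n * s - ψ c ∈ tailSpan ψ y m) :
    IsPrincipalIdealRing S := by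
  refine ⟨fun I => ?_⟩
  obtain ⟨N, hN⟩ := monotone_stabilizes_iff_noetherian.2 (inferInstance : IsNoetherian R R)
    ⟨leadIdeal ψ y I, leadIdeal_mono ψ y I⟩
  obtain ⟨g, gI, hg⟩ := exists_simultaneous_lead ψ y I N
  have hg' : ∀ m, ∀ c ∈ leadIdeal ψ y I m, ψ c * g - ψ c ∈ tailSpan ψ y m := by
    intro m c hc
    rcases le_total m N with h | h
    · exact hg m h c hc
    · have := hN m h
      simp only [OrderHom.coe_mk] at this
      rw [← this] at hc
      exact tailSpan_mono ψ y h (hg N le_rfl c hc)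
  have main : ∀ m : ℕ, ∀ h ∈ I, (∃ c, h - ψ c ∈ tailSpan ψ y m) → h ∈ Ideal.span {g} := by
    intro m
    induction m with
    | zero =>
      rintro h hI ⟨c, hc⟩
      have h1 := hg' 0 c ⟨h, hI, hc⟩
      have h2 := sub_mem hc h1
      rw [tailSpan_zero, AddSubgroup.mem_bot] at h2
      have : h = ψ c * g := by rw [sub_sub_sub_cancel_right] at h2; exact sub_eq_zero.1 h2
      rw [this]
      exact Ideal.mul_mem_left _ _ (Ideal.mem_span_singleton_self g)
    | succ m ih =>
      rintro h hI ⟨c, hc⟩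
      have h1 := hg' (m + 1) c ⟨h, hI, hc⟩
      have h2 := sub_mem hc h1
      rw [sub_sub_sub_cancel_right] at h2
      have h3 := ih (x * (h - ψ c * g))
        (I.mul_mem_left _ (I.sub_mem hI (I.mul_mem_left _ gI)))
        (exists_sub_mem_tailSpan_of_mul hx hxy h2)
      have h4 := Ideal.mul_mem_left _ y h3
      rw [← mul_assoc, hyx, one_mul] at h4
      have h5 := add_mem h4 (Ideal.mul_mem_left _ (ψ c) (Ideal.mem_span_singleton_self g))
      rwa [sub_add_cancel] at h5
  refine ⟨g, le_antisymm (fun h hI => ?_) ?_⟩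
  · obtain ⟨n, m, hnm⟩ := hgen h
    have h1 := Ideal.mul_mem_left _ (x ^ n) (main m _ (I.mul_mem_left (y ^ n) hI) hnm)
    have hc : Commute x y := hxy.trans hyx.symm
    rwa [← mul_assoc, ← hc.mul_pow, hxy, one_pow, one_mul] at h1
  · exact (Ideal.span_singleton_le_iff_mem I).2 gI

end SkewLaurent

/-! ### Sufficiency -/

section Backward

open MonoidAlgebra

/-- If `N` is a finite normal subgroup whose order is invertible in `K` and `G ⧸ N` is cyclic, then
`KG` is generated by the semisimple ring `KN` (Maschke) and a unit normalising it. -/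
theorem isPrincipalIdealRing_of_cyclic_quotient {K G : Type*} [Field K] [Group G]
    (N : Subgroup G) [N.Normal] [Finite N] (hN : (Nat.card N : K) ≠ 0) [IsCyclic (G ⧸ N)] :
    IsPrincipalIdealRing (MonoidAlgebra K G) := by
  have : NeZero (Nat.card N : K) := ⟨hN⟩
  have : IsSemisimpleRing (MonoidAlgebra K N) :=
    inferInstanceAs (IsSemisimpleModule (MonoidAlgebra K N) (MonoidAlgebra K N))
  obtain ⟨q, hq⟩ := IsCyclic.exists_generator (α := G ⧸ N)
  obtain ⟨t, rfl⟩ := QuotientGroup.mk_surjective q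
  let ψ : MonoidAlgebra K N →+* MonoidAlgebra K G := mapDomainRingHom K N.subtype
  have hψ : ∀ (a : N) (r : K), ψ (single a r) = single (a : G) r := fun a r => by simp [ψ]
  have hconj : ∀ (u : G) (r : MonoidAlgebra K N),
      ∃ r', (of K G u : MonoidAlgebra K G) * ψ r = ψ r' * of K G u := by
    intro u r
    induction r using MonoidAlgebra.induction_linear with
    | zero => exact ⟨0, by simp⟩
    | add a b ha hb =>
      obtain ⟨a', ha'⟩ := ha
      obtain ⟨b', hb'⟩ := hb
      exact ⟨a' + b', by rw [map_add, map_add, mul_add, add_mul, ha', hb']⟩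
    | single n c =>
      refine ⟨single ⟨u * n * u⁻¹, Subgroup.Normal.conj_mem inferInstance _ n.2 u⟩ c, ?_⟩
      rw [hψ, hψ, of_apply, single_mul_single, single_mul_single]
      simp
  have hxy : (of K G t : MonoidAlgebra K G) * of K G t⁻¹ = 1 := by
    rw [← map_mul, mul_inv_cancel, map_one]
  have hyx : (of K G t⁻¹ : MonoidAlgebra K G) * of K G t = 1 := by
    rw [← map_mul, inv_mul_cancel, map_one]
  refine isPrincipalIdealRing_of_skewLaurent ψ (of K G t) (of K G t⁻¹) hxy hyx (hconj t) ?_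
  suffices h : ∀ s : MonoidAlgebra K G, ∃ n₀ : ℕ, ∀ n ≥ n₀, ∃ m c,
      of K G t⁻¹ ^ n * s - ψ c ∈ tailSpan ψ (of K G t⁻¹) m by
    intro s
    obtain ⟨n, hn⟩ := h s
    exact ⟨n, hn n le_rfl⟩
  intro s
  induction s using MonoidAlgebra.induction_linear with
  | zero => exact ⟨0, fun n _ => ⟨0, 0, by simp⟩⟩
  | add a b ha hb =>
    obtain ⟨n₁, h₁⟩ := ha
    obtain ⟨n₂, h₂⟩ := hb
    refine ⟨max n₁ n₂, fun n hn => ?_⟩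
    obtain ⟨m, c, hc⟩ := h₁ n ((le_max_left _ _).trans hn)
    obtain ⟨m', c', hc'⟩ := h₂ n ((le_max_right _ _).trans hn)
    refine ⟨max m m', c + c', ?_⟩
    rw [map_add, mul_add, add_sub_add_comm]
    exact add_mem (tailSpan_mono _ _ (le_max_left _ _) hc) (tailSpan_mono _ _ (le_max_right _ _) hc')
  | single g r =>
    obtain ⟨k, hk⟩ := Subgroup.mem_zpowers_iff.1 (hq (g : G ⧸ N))
    have hν : g * t ^ (-k) ∈ N := by
      rw [← QuotientGroup.eq_one_iff, QuotientGroup.mk_mul, QuotientGroup.mk_zpow, ← hk, ← zpow_add,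
        add_neg_cancel, zpow_zero]
    refine ⟨k.toNat, fun n hn => ?_⟩
    obtain ⟨j, hj⟩ : ∃ j : ℕ, (j : ℤ) = n - k := ⟨(n - k).toNat, by omega⟩
    -- `t⁻ⁿ g = ν t⁻ʲ` with `ν ∈ N` and `j = n - k ≥ 0`.
    let ν : N := ⟨t⁻¹ ^ n * (g * t ^ (-k)) * (t⁻¹ ^ n)⁻¹,
      Subgroup.Normal.conj_mem inferInstance _ hν _⟩
    have e : (of K G t⁻¹ ^ n * single g r : MonoidAlgebra K G)
        = ψ (single ν r) * of K G t⁻¹ ^ j := by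
      rw [hψ, ← map_pow, ← map_pow, of_apply, of_apply, single_mul_single, single_mul_single,
        one_mul, mul_one]
      congr 1
      simp only [ν]
      have : t⁻¹ ^ j = t ^ (k - n : ℤ) := by
        rw [inv_pow, ← zpow_natCast, ← zpow_neg, hj, neg_sub]
      rw [this, inv_pow, inv_inv, ← zpow_natCast t n, mul_assoc (_ * _), ← zpow_add,
        mul_assoc, mul_assoc g, ← zpow_add]
      simp
    rw [e]
    cases j with
    | zero => exact ⟨0, single ν r, by simp⟩
    | succ j =>
      refine ⟨j + 1, 0, ?_⟩
      rw [map_zero, sub_zero]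
      exact AddSubgroup.subset_closure ⟨single ν r, j, by omega, rfl⟩

end Backward

/-! ### Idempotent ideals and the augmentation -/

section Idempotent

/-- In a left noetherian ring with an involution `τ`, an idempotent `τ`-stable two-sided ideal
which is principal as a left ideal has a left identity element. Right multiplication by the
generator is a surjective, hence injective, endomorphism of the ideal; this gives a right identity,
which `τ` turns into a left identity. -/
theorem exists_left_identity {S : Type*} [Ring S] [IsNoetherianRing S] (τ : S → S)
    (hmul : ∀ a b, τ (a * b) = τ b * τ a) (hττ : ∀ a, τ (τ a) = a) {ω : S}
    (htwo : ∀ s, ω * s ∈ Ideal.span {ω}) (hτ : ∀ w ∈ Ideal.span {ω}, τ w ∈ Ideal.span {ω})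
    {e : S} (he : e ∈ Ideal.span {ω}) (heω : ω = e * ω) :
    ∃ f ∈ Ideal.span {ω}, ∀ w ∈ Ideal.span {ω}, f * w = w := by
  let W : Ideal S := Ideal.span {ω}
  let ρ : W →ₗ[S] W :=
    { toFun := fun w => ⟨w * ω, Ideal.mul_mem_left _ _ (Ideal.mem_span_singleton_self ω)⟩
      map_add' := fun a b => Subtype.ext (add_mul (a : S) b ω)
      map_smul' := fun c a => Subtype.ext (mul_assoc c (a : S) ω) }
  have hsurj : Function.Surjective ρ := by
    rintro ⟨w, hw⟩
    obtain ⟨s, rfl⟩ := Ideal.mem_span_singleton'.1 hw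
    refine ⟨⟨s * e, Ideal.mul_mem_left _ _ he⟩, Subtype.ext ?_⟩
    change s * e * ω = s * ω
    rw [mul_assoc, ← heω]
  have hinj : Function.Injective ρ := IsNoetherian.injective_of_surjective_endomorphism ρ hsurj
  have hWe : ∀ w ∈ W, w * e ∈ W := by
    intro w hw
    obtain ⟨s, rfl⟩ := Ideal.mem_span_singleton'.1 hw
    rw [mul_assoc]
    exact W.mul_mem_left _ (htwo e)
  have hright : ∀ w ∈ W, w * e = w := by
    intro w hw
    have : ρ ⟨w * e, hWe w hw⟩ = ρ ⟨w, hw⟩ := by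
      refine Subtype.ext ?_
      change w * e * ω = w * ω
      rw [mul_assoc, ← heω]
    exact congrArg Subtype.val (hinj this)
  refine ⟨τ e, hτ e he, fun w hw => ?_⟩
  rw [← hττ w, ← hmul, hright _ (hτ w hw)]

end Idempotent

section GroupAlgebra

open MonoidAlgebra

variable {K G H : Type*} [Field K] [Group G] [Group H]

variable (K G) in
/-- The augmentation map `KG → K`, sending an element to the sum of its coefficients. -/
noncomputable def aug : MonoidAlgebra K G →ₐ[K] K := MonoidAlgebra.lift K K G 1

@[simp] lemma aug_single (g : G) (r : K) : aug K G (single g r) = r := by simp [aug]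

variable (K G) in
/-- The standard involution `g ↦ g⁻¹` of `KG`, as an algebra map to the opposite algebra. -/
noncomputable def involutionHom : MonoidAlgebra K G →ₐ[K] (MonoidAlgebra K G)ᵐᵒᵖ :=
  MonoidAlgebra.lift K _ G
    { toFun := fun g => MulOpposite.op (of K G g⁻¹)
      map_one' := by rw [inv_one, map_one]; rfl
      map_mul' := fun a b => by rw [mul_inv_rev, map_mul, MulOpposite.op_mul] }

/-- The standard involution of `KG`, the linear antiautomorphism extending `g ↦ g⁻¹`. -/
noncomputable def involution (s : MonoidAlgebra K G) : MonoidAlgebra K G :=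
  (involutionHom K G s).unop

lemma involution_single (g : G) (r : K) :
    involution (single g r : MonoidAlgebra K G) = single g⁻¹ r := by
  simp [involution, involutionHom]

lemma involution_zero : involution (0 : MonoidAlgebra K G) = 0 := by simp [involution]

lemma involution_add (a b : MonoidAlgebra K G) :
    involution (a + b) = involution a + involution b := by simp [involution]

lemma involution_mul (a b : MonoidAlgebra K G) :
    involution (a * b) = involution b * involution a := by simp [involution]

lemma involution_involution (a : MonoidAlgebra K G) : involution (involution a) = a := by
  induction a using MonoidAlgebra.induction_linear with
  | zero => simp [involution_zero]
  | add a b ha hb => rw [involution_add, involution_add, ha, hb]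
  | single g r => rw [involution_single, involution_single, inv_inv]

lemma aug_involution (a : MonoidAlgebra K G) : aug K G (involution a) = aug K G a := by
  induction a using MonoidAlgebra.induction_linear with
  | zero => simp [involution_zero]
  | add a b ha hb => rw [involution_add, map_add, map_add, ha, hb]
  | single g r => rw [involution_single, aug_single, aug_single]

lemma mapDomainRingHom_involution (φ : G →* H) (a : MonoidAlgebra K G) :
    mapDomainRingHom K φ (involution a) = involution (mapDomainRingHom K φ a) := by
  induction a using MonoidAlgebra.induction_linear with
  | zero => simp [involution_zero]
  | add a b ha hb => rw [involution_add, map_add, map_add, involution_add, ha, hb]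
  | single g r => simp [involution_single]

lemma aug_mapDomainRingHom (φ : G →* H) (a : MonoidAlgebra K G) :
    aug K H (mapDomainRingHom K φ a) = aug K G a := by
  induction a using MonoidAlgebra.induction_linear with
  | zero => simp
  | add a b ha hb => simp only [map_add, ha, hb]
  | single g r => simp

lemma mapDomainRingHom_surjective {φ : G →* H} (hφ : Function.Surjective φ) :
    Function.Surjective (mapDomainRingHom K φ) := by
  intro b
  induction b using MonoidAlgebra.induction_linear with
  | zero => exact ⟨0, map_zero _⟩
  | add a b ha hb =>
    obtain ⟨a, rfl⟩ := ha
    obtain ⟨b, rfl⟩ := hb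
    exact ⟨a + b, map_add _ _ _⟩
  | single h r =>
    obtain ⟨g, rfl⟩ := hφ h
    exact ⟨single g r, by simp⟩

/-- The kernel of `KG → KH` for surjective `φ : G → H` is the left ideal generated by the `d - 1`,
`d ∈ ker φ`: modulo these, every `g` is congruent to a chosen representative of its coset. -/
lemma mem_span_of_mapDomainRingHom_eq_zero {φ : G →* H} (hφ : Function.Surjective φ)
    {w : MonoidAlgebra K G} (hw : mapDomainRingHom K φ w = 0) :
    w ∈ Ideal.span {s : MonoidAlgebra K G | ∃ d ∈ φ.ker, s = of K G d - 1} := by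
  have key : ∀ w : MonoidAlgebra K G,
      w - mapDomain (Function.surjInv hφ) (mapDomainRingHom K φ w) ∈
        Ideal.span {s : MonoidAlgebra K G | ∃ d ∈ φ.ker, s = of K G d - 1} := by
    intro w
    induction w using MonoidAlgebra.induction_linear with
    | zero => simp
    | add a b ha hb =>
      rw [map_add, mapDomain_add, add_sub_add_comm]
      exact add_mem ha hb
    | single g r =>
      have e : (single g r - mapDomain (Function.surjInv hφ) (mapDomainRingHom K φ (single g r)) :
          MonoidAlgebra K G) = single (Function.surjInv hφ (φ g)) r *
            (of K G ((Function.surjInv hφ (φ g))⁻¹ * g) - 1) := by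
        rw [mul_sub, mul_one, of_apply, single_mul_single]
        simp
      rw [e]
      refine Ideal.mul_mem_left _ _ (Ideal.subset_span ⟨_, ?_, rfl⟩)
      rw [MonoidHom.mem_ker, map_mul, map_inv, Function.surjInv_eq hφ, inv_mul_cancel]
  have := key w
  rwa [hw, mapDomain_zero, sub_zero] at this

lemma mapDomainRingHom_of_sub_one {φ : G →* H} {d : G} (hd : d ∈ φ.ker) :
    mapDomainRingHom K φ (of K G d - 1) = 0 := by
  rw [map_sub, map_one, sub_eq_zero]
  simp [MonoidHom.mem_ker.1 hd, MonoidAlgebra.one_def]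

lemma aug_eq_sum (a : MonoidAlgebra K G) : aug K G a = ∑ g ∈ a.coeff.support, a.coeff g := by
  simp [aug, MonoidAlgebra.lift_apply, Finsupp.sum]

/-- If right translation by `D` fixes an element of nonzero augmentation, then `D` is finite (it
permutes the support freely), and its order divides the augmentation (coefficients are constant on
cosets), so is nonzero in `K`. -/
theorem finite_of_mul_eq_self {a : MonoidAlgebra K G} (ha : aug K G a ≠ 0) (D : Subgroup G)
    (hD : ∀ d ∈ D, a * (of K G d - 1) = 0) : Finite D ∧ (Nat.card D : K) ≠ 0 := by
  have hconst : ∀ d ∈ D, ∀ g, a.coeff (g * d) = a.coeff g := by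
    intro d hd g
    have h := hD d hd
    rw [mul_sub, mul_one, sub_eq_zero] at h
    have := congrArg (fun x : MonoidAlgebra K G => x.coeff (g * d)) h
    simpa using this.symm
  have ha0 : a ≠ 0 := by rintro rfl; simp at ha
  obtain ⟨g₀, hg₀⟩ : ∃ g, a.coeff g ≠ 0 := by
    by_contra! h
    exact ha0 (MonoidAlgebra.ext (Finsupp.ext h))
  have hfin : Finite D := by
    refine Finite.of_injective (β := a.coeff.support)
      (fun d => ⟨g₀ * d, by rw [Finsupp.mem_support_iff, hconst d d.2]; exact hg₀⟩) ?_
    intro d d' h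
    simpa using h
  refine ⟨hfin, fun hcard => ha ?_⟩
  classical
  have := Fintype.ofFinite D
  rw [aug_eq_sum, ← Finset.sum_fiberwise_of_maps_to
    (g := fun g : G => (g : G ⧸ D)) (t := a.coeff.support.image fun g : G => (g : G ⧸ D))
    (fun g hg => Finset.mem_image_of_mem _ hg)]
  refine Finset.sum_eq_zero fun c hc => ?_
  obtain ⟨g, hg, rfl⟩ := Finset.mem_image.1 hc
  rw [Finsupp.mem_support_iff] at hg
  have : ∑ x ∈ a.coeff.support.filter (fun x : G => (x : G ⧸ D) = (g : G ⧸ D)), a.coeff x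
      = ∑ d : D, a.coeff g := by
    symm
    refine Finset.sum_bij (fun d _ => g * (d : G)) ?_ ?_ ?_ ?_
    · intro d _
      simp [hconst d d.2, hg]
    · intro d _ d' _ h
      simpa using h
    · intro x hx
      rw [Finset.mem_filter] at hx
      exact ⟨⟨g⁻¹ * x, QuotientGroup.eq.1 hx.2.symm⟩, Finset.mem_univ _, by simp⟩
    · intro d _
      exact (hconst d d.2 g).symm
  rw [this, Finset.sum_const, Finset.card_univ, ← Nat.card_eq_fintype_card, nsmul_eq_mul, hcard,
    zero_mul]

/-! ### Groups mapping onto `ℤ` -/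

lemma exists_augmentation_generator (K G : Type*) [Field K] [Group G]
    [IsPrincipalIdealRing (MonoidAlgebra K G)] :
    ∃ α : MonoidAlgebra K G, aug K G α = 0 ∧ ∀ s, aug K G s = 0 → ∃ u, s = u * α := by
  obtain ⟨α, hα⟩ := (IsPrincipalIdealRing.principal (RingHom.ker (aug K G))).principal
  refine ⟨α, ?_, fun s hs => ?_⟩
  · rw [← RingHom.mem_ker, hα]
    exact Submodule.mem_span_singleton_self α
  · rw [← RingHom.mem_ker, hα] at hs
    obtain ⟨u, hu⟩ := Submodule.mem_span_singleton.1 hs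
    exact ⟨u, hu.symm⟩

/-- The part of `s ∈ KG` supported on the fibre `φ⁻¹ {h}`. -/
noncomputable def fiberPart (φ : G →* H) (h : H) (s : MonoidAlgebra K G) : MonoidAlgebra K G := by
  classical exact .ofCoeff (s.coeff.filter fun g => φ g = h)

lemma fiberPart_zero (φ : G →* H) (h : H) : fiberPart φ h (0 : MonoidAlgebra K G) = 0 := by
  ext
  simp [fiberPart, Finsupp.filter_apply]

lemma fiberPart_add (φ : G →* H) (h : H) (a b : MonoidAlgebra K G) :
    fiberPart φ h (a + b) = fiberPart φ h a + fiberPart φ h b := by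
  simp [fiberPart, Finsupp.filter_add]

lemma fiberPart_single_of_eq {φ : G →* H} {h : H} {g : G} (hg : φ g = h) (r : K) :
    fiberPart φ h (single g r) = single g r := by
  ext
  simp [fiberPart, hg]

lemma fiberPart_single_of_ne {φ : G →* H} {h : H} {g : G} (hg : φ g ≠ h) (r : K) :
    fiberPart φ h (single g r) = 0 := by
  ext
  simp [fiberPart, hg]

lemma fiberPart_mul_of {φ : G →* H} {h : H} {d : G} (hd : d ∈ φ.ker) (s : MonoidAlgebra K G) :
    fiberPart φ h (s * of K G d) = fiberPart φ h s * of K G d := by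
  induction s using MonoidAlgebra.induction_linear with
  | zero => simp [fiberPart_zero]
  | add a b ha hb => rw [add_mul, fiberPart_add, ha, hb, fiberPart_add, add_mul]
  | single g r =>
    have hgd : φ (g * d) = φ g := by rw [map_mul, MonoidHom.mem_ker.1 hd, mul_one]
    rw [of_apply, single_mul_single, mul_one]
    by_cases hg : φ g = h
    · rw [fiberPart_single_of_eq hg, fiberPart_single_of_eq (hgd.trans hg), single_mul_single,
        mul_one]
    · rw [fiberPart_single_of_ne hg, fiberPart_single_of_ne (hgd ▸ hg), zero_mul]

lemma fiberPart_mul_of_sub_one {φ : G →* H} {h : H} {d : G} (hd : d ∈ φ.ker)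
    (s : MonoidAlgebra K G) :
    fiberPart φ h (s * (of K G d - 1)) = fiberPart φ h s * (of K G d - 1) := by
  have e : s * of K G d = s * (of K G d - 1) + s := by rw [mul_sub, mul_one, sub_add_cancel]
  have := fiberPart_mul_of (h := h) hd s
  rw [e, fiberPart_add] at this
  rw [mul_sub (fiberPart φ h s), mul_one, ← this, add_sub_cancel_right]

lemma mapDomainRingHom_fiberPart (φ : G →* H) (h : H) (s : MonoidAlgebra K G) :
    mapDomainRingHom K φ (fiberPart φ h s) = single h ((mapDomainRingHom K φ s).coeff h) := by
  induction s using MonoidAlgebra.induction_linear with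
  | zero => simp [fiberPart_zero]
  | add a b ha hb => rw [fiberPart_add, map_add, ha, hb, map_add, coeff_add, Finsupp.add_apply,
      single_add]
  | single g r =>
    by_cases hg : φ g = h
    · rw [fiberPart_single_of_eq hg]
      simp [hg]
    · rw [fiberPart_single_of_ne hg]
      simp [hg]

/-- The span of the products `u (d - 1)` with `u` in the kernel `W` of `KG → KH` and `d ∈ ker φ`.
For surjective `φ` this is `W²`; the displayed generators make it visibly stable under taking the
part supported on a fibre. -/
noncomputable def kerSq (K : Type*) [Field K] (φ : G →* H) : Ideal (MonoidAlgebra K G) :=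
  Ideal.span {s | ∃ u, mapDomainRingHom K φ u = 0 ∧ ∃ d ∈ φ.ker, s = u * (of K G d - 1)}

lemma mul_mem_kerSq {φ : G →* H} (hφ : Function.Surjective φ) {u w : MonoidAlgebra K G}
    (hu : mapDomainRingHom K φ u = 0) (hw : mapDomainRingHom K φ w = 0) :
    u * w ∈ kerSq K φ := by
  have hw' := mem_span_of_mapDomainRingHom_eq_zero hφ hw
  suffices h : ∀ u, mapDomainRingHom K φ u = 0 → u * w ∈ kerSq K φ from h u hu
  clear hu hw
  induction hw' using Submodule.span_induction with
  | mem x hx =>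
    obtain ⟨d, hd, rfl⟩ := hx
    exact fun u hu => Ideal.subset_span ⟨u, hu, d, hd, rfl⟩
  | zero => intro u _; simp
  | add x y _ _ hx hy => intro u hu; rw [mul_add]; exact add_mem (hx u hu) (hy u hu)
  | smul a x _ hx =>
    intro u hu
    rw [smul_eq_mul, ← mul_assoc]
    exact hx _ (by rw [map_mul, hu, zero_mul])

lemma fiberPart_mem_kerSq {φ : G →* H} (h : H) {s : MonoidAlgebra K G} (hs : s ∈ kerSq K φ) :
    fiberPart φ h s ∈ kerSq K φ := by
  suffices h' : ∀ a, fiberPart φ h (a * s) ∈ kerSq K φ by simpa using h' 1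
  induction hs using Submodule.span_induction with
  | mem x hx =>
    obtain ⟨u, hu, d, hd, rfl⟩ := hx
    intro a
    rw [← mul_assoc, fiberPart_mul_of_sub_one hd]
    refine Ideal.subset_span ⟨_, ?_, d, hd, rfl⟩
    rw [mapDomainRingHom_fiberPart, map_mul, hu, mul_zero]
    simp
  | zero => intro a; simp [fiberPart_zero]
  | add x y _ _ hx hy => intro a; rw [mul_add, fiberPart_add]; exact add_mem (hx a) (hy a)
  | smul c x _ hx => intro a; rw [smul_eq_mul, ← mul_assoc]; exact hx _

/-- If `b ∈ KG` has nonzero image in `KH` and `b (d - 1) ∈ W²`, then `d - 1 ∈ W²`: compare the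
parts supported on one fibre, where `b` agrees modulo `W` with a nonzero multiple of a group
element. -/
lemma sub_one_mem_kerSq {φ : G →* H} (hφ : Function.Surjective φ) {b : MonoidAlgebra K G}
    (hb : mapDomainRingHom K φ b ≠ 0) {d : G} (hd : d ∈ φ.ker)
    (h : b * (of K G d - 1) ∈ kerSq K φ) : of K G d - 1 ∈ kerSq K φ := by
  obtain ⟨x, hx⟩ : ∃ x, (mapDomainRingHom K φ b).coeff x ≠ 0 := by
    by_contra! h'
    exact hb (MonoidAlgebra.ext (Finsupp.ext h'))
  set c := (mapDomainRingHom K φ b).coeff x with hc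
  obtain ⟨t, rfl⟩ := hφ x
  have h1 := fiberPart_mem_kerSq (φ t) h
  rw [fiberPart_mul_of_sub_one hd] at h1
  have h2 : mapDomainRingHom K φ (fiberPart φ (φ t) b - single t c) = 0 := by
    rw [map_sub, mapDomainRingHom_fiberPart, ← hc]
    simp
  have h3 : single t c * (of K G d - 1) ∈ kerSq K φ := by
    have := sub_mem h1 (mul_mem_kerSq hφ h2 (mapDomainRingHom_of_sub_one hd))
    rwa [sub_mul, sub_sub_cancel] at this
  have h4 := Ideal.mul_mem_left _ (single t⁻¹ c⁻¹) h3
  rwa [← mul_assoc, single_mul_single, inv_mul_cancel, inv_mul_cancel₀ hx, ← MonoidAlgebra.one_def,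
    one_mul] at h4

/-- Let `KG` be a principal left ideal ring and let `φ` map `G` onto a nontrivial group `H` for
which `KH` is a commutative domain. Then `ker φ` is a finite group of order invertible in `K`.

Put `W = ker (KG → KH)`, and let `α` generate the augmentation ideal. As `KH` is a domain,
`W = W α`. The involution then gives a generator `ω` of `W` with `b ω = 0` for some `b` of
augmentation `1`, so that `b W ⊆ W²`, and this forces `W = W²`. Hence `W` has a left identity `f`,
and `1 - f` is fixed under right translation by `ker φ`. -/
theorem finite_ker_of_surjective {H : Type*} [CommGroup H] [Nontrivial H]
    [NoZeroDivisors (MonoidAlgebra K H)] [IsPrincipalIdealRing (MonoidAlgebra K G)]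
    (φ : G →* H) (hφ : Function.Surjective φ) :
    Finite φ.ker ∧ (Nat.card φ.ker : K) ≠ 0 := by
  obtain ⟨π, hπ⟩ : ∃ π : MonoidAlgebra K G →+* MonoidAlgebra K H, π = mapDomainRingHom K φ :=
    ⟨_, rfl⟩
  have hker : ∀ d ∈ φ.ker, π (of K G d - 1) = 0 := fun d hd => by
    rw [hπ, mapDomainRingHom_of_sub_one hd]
  obtain ⟨α, hα, hαgen⟩ := exists_augmentation_generator K G
  obtain ⟨ω, hω⟩ := (IsPrincipalIdealRing.principal (RingHom.ker π)).principal
  have hW : ∀ w, w ∈ Ideal.span {ω} ↔ π w = 0 := by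
    intro w
    rw [← RingHom.mem_ker, hω]
  have hπω : π ω = 0 := (hW ω).1 (Ideal.mem_span_singleton_self ω)
  have hπα : π α ≠ 0 := by
    intro h0
    obtain ⟨x, hx⟩ := exists_ne (1 : H)
    obtain ⟨g, rfl⟩ := hφ x
    obtain ⟨u, hu⟩ := hαgen (of K G g - 1) (by simp)
    have h1 := congrArg π hu
    rw [map_mul, h0, mul_zero, map_sub, map_one, sub_eq_zero] at h1
    have h2 : (single (φ g) 1 : MonoidAlgebra K H) = single 1 1 := by
      simpa [hπ, MonoidAlgebra.one_def] using h1
    exact hx (by simpa using of_injective (R := K) (M := H) h2)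
  have hWα : ∀ w, π w = 0 → ∃ z, π z = 0 ∧ w = z * α := by
    intro w hw
    obtain ⟨z, rfl⟩ := hαgen w (by rw [← aug_mapDomainRingHom φ w, ← hπ, hw, map_zero])
    rw [map_mul] at hw
    exact ⟨z, (mul_eq_zero.1 hw).resolve_right hπα, rfl⟩
  have hinv : ∀ w, π w = 0 → π (involution w) = 0 := by
    intro w hw
    rw [hπ, mapDomainRingHom_involution, ← hπ, hw, involution_zero]
  obtain ⟨b, hb, hbω⟩ : ∃ b, aug K G b = 1 ∧ b * ω = 0 := by
    obtain ⟨z, hz, hzω⟩ := hWα _ (hinv ω hπω)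
    obtain ⟨s, hs⟩ := Ideal.mem_span_singleton'.1 ((hW _).2 (hinv z hz))
    refine ⟨1 - involution α * s, ?_, ?_⟩
    · rw [map_sub, map_one, map_mul, aug_involution, hα, zero_mul, sub_zero]
    · rw [sub_mul, one_mul, mul_assoc, hs, ← involution_mul, ← hzω, involution_involution, sub_self]
  have hπb : π b ≠ 0 := by
    intro h0
    rw [← aug_mapDomainRingHom φ b, ← hπ, h0, map_zero] at hb
    exact zero_ne_one hb
  have hsq : ∀ d ∈ φ.ker, of K G d - 1 ∈ kerSq K φ := by
    intro d hd
    refine sub_one_mem_kerSq hφ (hπ ▸ hπb) hd ?_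
    obtain ⟨s, hs⟩ := Ideal.mem_span_singleton'.1 ((hW _).2 (hker d hd))
    have e : b * (of K G d - 1) = (b * s - s * b) * ω := by
      rw [← hs, sub_mul, mul_assoc s, hbω, mul_zero, sub_zero, mul_assoc]
    rw [e]
    refine mul_mem_kerSq hφ ?_ (hπ ▸ hπω)
    rw [← hπ, map_sub, map_mul, map_mul, mul_comm, sub_self]
  obtain ⟨e, he, heω⟩ : ∃ e ∈ Ideal.span {ω}, ω = e * ω := by
    have h1 : ω ∈ kerSq K φ := by
      refine (Ideal.span_le.2 ?_) (mem_span_of_mapDomainRingHom_eq_zero hφ (hπ ▸ hπω))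
      rintro _ ⟨d, hd, rfl⟩
      exact hsq d hd
    suffices h : ∀ s ∈ kerSq K φ, ∃ e ∈ Ideal.span {ω}, s = e * ω from h ω h1
    intro s hs
    induction hs using Submodule.span_induction with
    | mem x hx =>
      obtain ⟨u, hu, d, hd, rfl⟩ := hx
      obtain ⟨s, hs⟩ := Ideal.mem_span_singleton'.1 ((hW _).2 (hker d hd))
      refine ⟨u * s, (hW _).2 ?_, by rw [mul_assoc, hs]⟩
      rw [map_mul, hπ, hu, zero_mul]
    | zero => exact ⟨0, zero_mem _, by simp⟩
    | add x y _ _ hx hy =>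
      obtain ⟨a, ha, rfl⟩ := hx
      obtain ⟨c, hc, rfl⟩ := hy
      exact ⟨a + c, add_mem ha hc, (add_mul _ _ _).symm⟩
    | smul a x _ hx =>
      obtain ⟨c, hc, rfl⟩ := hx
      exact ⟨a * c, Ideal.mul_mem_left _ _ hc, (mul_assoc _ _ _).symm⟩
  have htwo : ∀ s, ω * s ∈ Ideal.span {ω} := fun s =>
    (hW _).2 (by rw [map_mul, hπω, zero_mul])
  have hstable : ∀ w ∈ Ideal.span {ω}, involution w ∈ Ideal.span {ω} := fun w hw =>
    (hW _).2 (hinv w ((hW w).1 hw))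
  obtain ⟨f, hf, hfW⟩ := exists_left_identity (S := MonoidAlgebra K G) involution involution_mul
    involution_involution htwo hstable he heω
  refine finite_of_mul_eq_self (a := 1 - f) ?_ φ.ker fun d hd => ?_
  · rw [map_sub, map_one, ← aug_mapDomainRingHom φ f, ← hπ, (hW f).1 hf, map_zero, sub_zero]
    exact one_ne_zero
  · rw [sub_mul, one_mul, hfW _ ((hW _).2 (hker d hd)), sub_self]

/-! ### Finitely generated abelianization -/

lemma mapDomainRingHom_one (a : MonoidAlgebra K G) :
    mapDomainRingHom K (1 : G →* H) a = single 1 (aug K G a) := by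
  induction a using MonoidAlgebra.induction_linear with
  | zero => simp
  | add a b ha hb => rw [map_add, map_add, ha, hb, single_add]
  | single g r => simp

lemma mapDomainRingHom_eq_of_support {φ : G →* H} {a : MonoidAlgebra K G}
    (h : ∀ g ∈ a.coeff.support, φ g = 1) :
    mapDomainRingHom K φ a = single 1 (aug K G a) := by
  rw [← mapDomainRingHom_one]
  apply MonoidAlgebra.ext
  have := Finsupp.mapDomain_congr (M := K) (v := a.coeff) (f := φ) (g := (1 : G →* H)) h
  simpa using this

/-- A finitely generated abelian group is finite or maps onto `ℤ`. -/
lemma finite_or_surjective_int (A : Type*) [AddCommGroup A] [AddGroup.FG A] :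
    Finite A ∨ ∃ φ : A →+ ℤ, Function.Surjective φ := by
  obtain ⟨n, ι, fι, p, hp, e, ⟨f⟩⟩ := AddCommGroup.equiv_free_prod_directSum_zmod A
  rcases n with - | n
  · left
    have hne : ∀ i, NeZero (p i ^ e i) := fun i => ⟨pow_ne_zero _ (hp i).ne_zero⟩
    have : Finite (DirectSum ι fun i => ZMod (p i ^ e i)) := by
      classical
      exact Finite.of_equiv (∀ i, ZMod (p i ^ e i)) DFinsupp.equivFunOnFintype.symm
    exact Finite.of_equiv _ f.symm.toEquiv
  · right
    refine ⟨((Finsupp.applyAddHom (0 : Fin (n + 1))).comp (AddMonoidHom.fst _ _)).comp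
      f.toAddMonoidHom, fun z => ⟨f.symm (Finsupp.single 0 z, 0), by simp⟩⟩

/-- If `KG` is a principal ideal ring then the support of a generator of the augmentation ideal
generates the abelianization of `G`: factoring out the image of the support sends the generator, and
hence every `g - 1`, to zero. -/
lemma surjective_int_or_finite_abelianization (K G : Type*) [Field K] [Group G]
    [IsPrincipalIdealRing (MonoidAlgebra K G)] :
    (∃ φ : G →* Multiplicative ℤ, Function.Surjective φ) ∨ Finite (Abelianization G) := by
  obtain ⟨α, hα, hgen⟩ := exists_augmentation_generator K G
  classical
  set H := Subgroup.closure (Abelianization.of '' (α.coeff.support : Set G)) with hH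
  set q : G →* Abelianization G ⧸ H := (QuotientGroup.mk' H).comp Abelianization.of with hq
  have hqα : mapDomainRingHom K q α = 0 := by
    rw [mapDomainRingHom_eq_of_support, hα, single_zero]
    intro g hg
    rw [hq, MonoidHom.comp_apply, QuotientGroup.mk'_apply, QuotientGroup.eq_one_iff]
    exact Subgroup.subset_closure ⟨g, hg, rfl⟩
  have hq1 : ∀ g, q g = 1 := by
    intro g
    obtain ⟨u, hu⟩ := hgen (of K G g - 1) (by simp)
    have h := congrArg (mapDomainRingHom K q) hu
    rw [map_mul, hqα, mul_zero, map_sub, map_one, sub_eq_zero, of_apply, mapDomainRingHom_apply,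
      mapDomain_single] at h
    exact of_injective (R := K) h
  have htop : H = ⊤ := by
    rw [eq_top_iff]
    intro x _
    obtain ⟨g, rfl⟩ := QuotientGroup.mk_surjective x
    exact (QuotientGroup.eq_one_iff _).1 (hq1 g)
  have hfg : Group.FG (Abelianization G) :=
    ⟨⟨α.coeff.support.image Abelianization.of, by rw [Finset.coe_image]; exact htop⟩⟩
  have hfg' : AddGroup.FG (Additive (Abelianization G)) := inferInstance
  rcases finite_or_surjective_int (Additive (Abelianization G)) with h | ⟨φ, hφ⟩
  · exact Or.inr h
  · refine Or.inl ⟨(AddMonoidHom.toMultiplicativeRight φ).comp Abelianization.of, fun z => ?_⟩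
    obtain ⟨x, hx⟩ := hφ z.toAdd
    obtain ⟨g, hg⟩ := QuotientGroup.mk_surjective x.toMul
    refine ⟨g, ?_⟩
    change Multiplicative.ofAdd (φ (Additive.ofMul (QuotientGroup.mk g))) = z
    rw [hg]
    exact congrArg Multiplicative.ofAdd hx

/-! ### Groups with finite abelianization -/

open scoped commutatorElement

/-- Expansion in powers of a generator `α` of the augmentation ideal. -/
lemma exists_expansion {α : MonoidAlgebra K G} (hgen : ∀ s, aug K G s = 0 → ∃ u, s = u * α)
    (n : ℕ) (x : MonoidAlgebra K G) :
    ∃ (c : ℕ → K) (s : MonoidAlgebra K G),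
      x = ∑ k ∈ Finset.range n, c k • α ^ k + s * α ^ n := by
  induction n with
  | zero => exact ⟨0, x, by simp⟩
  | succ n ih =>
    obtain ⟨c, s, hs⟩ := ih
    obtain ⟨u, hu⟩ := hgen (s - algebraMap K _ (aug K G s)) (by
      rw [map_sub, AlgHom.commutes, Algebra.algebraMap_self_apply, sub_self])
    refine ⟨Function.update c n (aug K G s), u, ?_⟩
    rw [Finset.sum_range_succ, Finset.sum_congr rfl (g := fun k => c k • α ^ k),
      Function.update_self, pow_succ' α n, ← mul_assoc u, ← hu, sub_mul, ← Algebra.smul_def]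
    · conv_lhs => rw [hs]
      abel
    · intro k hk
      rw [Function.update_of_ne (Finset.mem_range.1 hk).ne]

lemma pow_mul_mem_span_pow {α : MonoidAlgebra K G} (hα : aug K G α = 0)
    (hgen : ∀ s, aug K G s = 0 → ∃ u, s = u * α) (n : ℕ) (s : MonoidAlgebra K G) :
    α ^ n * s ∈ Ideal.span {α ^ n} := by
  rw [Ideal.mem_span_singleton']
  induction n generalizing s with
  | zero => exact ⟨s, by simp⟩
  | succ n ih =>
    obtain ⟨u, hu⟩ := hgen (α * s) (by rw [map_mul, hα, zero_mul])
    obtain ⟨v, hv⟩ := ih u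
    exact ⟨v, by rw [pow_succ, mul_assoc, hu, ← mul_assoc (α ^ n), ← hv, mul_assoc]⟩

lemma mul_mem_span_pow {α : MonoidAlgebra K G} (hα : aug K G α = 0)
    (hgen : ∀ s, aug K G s = 0 → ∃ u, s = u * α) {n : ℕ} {w : MonoidAlgebra K G}
    (hw : w ∈ Ideal.span {α ^ n}) (s : MonoidAlgebra K G) : w * s ∈ Ideal.span {α ^ n} := by
  obtain ⟨u, rfl⟩ := Ideal.mem_span_singleton'.1 hw
  rw [mul_assoc]
  exact Ideal.mul_mem_left _ _ (pow_mul_mem_span_pow hα hgen n s)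

/-- The quotient of `KG` by the ideal `KG αⁿ` is commutative, as it is spanned by powers of `α`. -/
lemma commutator_mem_span_pow {α : MonoidAlgebra K G} (hα : aug K G α = 0)
    (hgen : ∀ s, aug K G s = 0 → ∃ u, s = u * α) (n : ℕ) (x y : MonoidAlgebra K G) :
    x * y - y * x ∈ Ideal.span {α ^ n} := by
  obtain ⟨c, s, hx⟩ := exists_expansion hgen n x
  obtain ⟨d, t, hy⟩ := exists_expansion hgen n y
  set a := ∑ k ∈ Finset.range n, c k • α ^ k
  set b := ∑ k ∈ Finset.range n, d k • α ^ k
  have hab : a * b = b * a := by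
    refine Commute.sum_left _ _ _ fun i _ => Commute.sum_right _ _ _ fun j _ => ?_
    exact ((Commute.pow_pow (Commute.refl α) i j).smul_left _).smul_right _
  have hs : s * α ^ n ∈ Ideal.span {α ^ n} := Ideal.mem_span_singleton'.2 ⟨s, rfl⟩
  have ht : t * α ^ n ∈ Ideal.span {α ^ n} := Ideal.mem_span_singleton'.2 ⟨t, rfl⟩
  have e : x * y - y * x = (a * (t * α ^ n) + (s * α ^ n) * y) -
      (b * (s * α ^ n) + (t * α ^ n) * x) := by
    rw [hx, hy]
    simp only [add_mul, mul_add, hab]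
    abel
  rw [e]
  exact sub_mem (add_mem (Ideal.mul_mem_left _ _ ht) (mul_mem_span_pow hα hgen hs _))
    (add_mem (Ideal.mul_mem_left _ _ hs) (mul_mem_span_pow hα hgen ht _))

lemma pow_mem_span_pow {α : MonoidAlgebra K G} (hα : aug K G α = 0)
    (hgen : ∀ s, aug K G s = 0 → ∃ u, s = u * α) (n : ℕ) {s : MonoidAlgebra K G}
    (hs : aug K G s = 0) : s ^ n ∈ Ideal.span {α ^ n} := by
  induction n with
  | zero => exact Ideal.mem_span_singleton'.2 ⟨1, by simp⟩
  | succ n ih =>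
    obtain ⟨u, hu⟩ := Ideal.mem_span_singleton'.1 ih
    obtain ⟨v, rfl⟩ := hgen s hs
    obtain ⟨w, hw⟩ := Ideal.mem_span_singleton'.1 (pow_mul_mem_span_pow hα hgen n v)
    refine Ideal.mem_span_singleton'.2 ⟨u * w, ?_⟩
    rw [pow_succ (v * α), ← hu, mul_assoc u (α ^ n), ← mul_assoc (α ^ n), ← hw, pow_succ]
    simp only [mul_assoc]

lemma involution_pow (a : MonoidAlgebra K G) (n : ℕ) :
    involution (a ^ n) = involution a ^ n := by
  induction n with
  | zero => simp [involution]
  | succ n ih => rw [pow_succ, involution_mul, ih, pow_succ']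

/-- The subgroup of all `g` with `g - 1 ∈ KG αⁿ`. When `α` generates the augmentation ideal this is
the `n`-th dimension subgroup of `G` over `K`. -/
def dimensionSubgroup (α : MonoidAlgebra K G) (n : ℕ) : Subgroup G where
  carrier := {g | of K G g - 1 ∈ Ideal.span {α ^ n}}
  one_mem' := by simp [MonoidAlgebra.one_def]
  mul_mem' := by
    intro a b ha hb
    have e : of K G (a * b) - 1 = of K G a * (of K G b - 1) + (of K G a - 1) := by
      rw [map_mul, mul_sub, mul_one]; abel
    rw [Set.mem_ofPred_eq, e]
    exact add_mem (Ideal.mul_mem_left _ _ hb) ha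
  inv_mem' := by
    intro a ha
    have e : of K G a⁻¹ - 1 = - (of K G a⁻¹ * (of K G a - 1)) := by
      rw [mul_sub, mul_one, ← map_mul, inv_mul_cancel, map_one, neg_sub]
    rw [Set.mem_ofPred_eq, e]
    exact neg_mem (Ideal.mul_mem_left _ _ ha)

lemma mem_dimensionSubgroup {α : MonoidAlgebra K G} {n : ℕ} {g : G} :
    g ∈ dimensionSubgroup α n ↔ of K G g - 1 ∈ Ideal.span {α ^ n} := Iff.rfl

lemma commutator_le_dimensionSubgroup {α : MonoidAlgebra K G} (hα : aug K G α = 0)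
    (hgen : ∀ s, aug K G s = 0 → ∃ u, s = u * α) (n : ℕ) :
    commutator G ≤ dimensionSubgroup α n := by
  rw [commutator_eq_closure, Subgroup.closure_le]
  rintro _ ⟨a, b, rfl⟩
  have e : of K G ⁅a, b⁆ - 1 =
      (of K G a * of K G b - of K G b * of K G a) * of K G (a⁻¹ * b⁻¹) := by
    rw [sub_mul]
    simp only [← map_mul]
    rw [commutatorElement_def, ← map_one (of K G)]
    congr 2 <;> group
  rw [SetLike.mem_coe, mem_dimensionSubgroup, e]
  exact mul_mem_span_pow hα hgen (commutator_mem_span_pow hα hgen n _ _) _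

/-- If the abelianization is finite, the powers of the augmentation ideal stabilise: `KG αⁿ` contains
the kernel of `KG → K[G/G']`, and `K[G/G']` is finite dimensional. -/
lemma exists_pow_eq_mul_pow_succ [Finite (Abelianization G)] {α : MonoidAlgebra K G}
    (hα : aug K G α = 0) (hgen : ∀ s, aug K G s = 0 → ∃ u, s = u * α) :
    ∃ n s, α ^ n = s * α ^ (n + 1) := by
  obtain ⟨π, hπ⟩ : ∃ π : MonoidAlgebra K G →+* MonoidAlgebra K (Abelianization G),
    π = mapDomainRingHom K Abelianization.of := ⟨_, rfl⟩
  have hsurj : Function.Surjective (Abelianization.of : G →* Abelianization G) :=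
    QuotientGroup.mk_surjective
  have : Module.Finite K (MonoidAlgebra K (Abelianization G)) :=
    Module.Finite.equiv (coeffLinearEquiv K (S := K) (M := Abelianization G)).symm
  have : IsArtinianRing (MonoidAlgebra K (Abelianization G)) := IsArtinianRing.of_finite K _
  obtain ⟨n, b, hb⟩ := IsArtinian.exists_pow_succ_smul_dvd (π α)
    (1 : MonoidAlgebra K (Abelianization G))
  obtain ⟨s, rfl⟩ : ∃ s, π s = b := hπ ▸ mapDomainRingHom_surjective hsurj b
  refine ⟨n, ?_⟩
  have h0 : mapDomainRingHom K Abelianization.of (α ^ n - s * α ^ (n + 1)) = 0 := by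
    rw [← hπ, map_sub, map_mul, map_pow, map_pow, sub_eq_zero, mul_comm (π s)]
    simpa using hb.symm
  have hle : Ideal.span {s : MonoidAlgebra K G | ∃ d ∈ Abelianization.of.ker, s = of K G d - 1} ≤
      Ideal.span {α ^ (n + 1)} := by
    rw [Ideal.span_le]
    rintro _ ⟨d, hd, rfl⟩
    rw [Abelianization.ker_of] at hd
    exact commutator_le_dimensionSubgroup hα hgen (n + 1) hd
  obtain ⟨u, hu⟩ := Ideal.mem_span_singleton'.1
    (hle (mem_span_of_mapDomainRingHom_eq_zero hsurj h0))
  exact ⟨u + s, by rw [add_mul, hu, sub_add_cancel]⟩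

/-- In characteristic `p` a finite abelian `p`-group `P` such that `KP` is a principal ideal ring is
cyclic: with `q` the exponent of `P`, `q`-th powers are scalars, so `α ^ q = 0` and `KP` has dimension
at most `q`. -/
lemma isCyclic_of_isPGroup (K P : Type*) [Field K] [CommGroup P] [Finite P] (p : ℕ)
    (hp : p.Prime) [CharP K p] (hP : IsPGroup p P) [IsPrincipalIdealRing (MonoidAlgebra K P)] :
    IsCyclic P := by
  obtain ⟨α, hα, hgen⟩ := exists_augmentation_generator K P
  have := Fact.mk hp
  have : CharP (MonoidAlgebra K P) p := charP_of_injective_algebraMap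
    (algebraMap K (MonoidAlgebra K P)).injective p
  obtain ⟨m, hm⟩ := IsPGroup.iff_card.1 hP
  obtain ⟨k, -, hk⟩ := (Nat.dvd_prime_pow hp).1 (hm ▸ Group.exponent_dvd_nat_card (G := P))
  have hpow : ∀ x : MonoidAlgebra K P, x ^ p ^ k = algebraMap K _ (aug K P x ^ p ^ k) := by
    intro x
    induction x using MonoidAlgebra.induction_linear with
    | zero => simp [hp.ne_zero]
    | add a b ha hb => rw [add_pow_char_pow, ha, hb, map_add, add_pow_char_pow, map_add]
    | single g r =>
      rw [single_pow, ← hk, Monoid.pow_exponent_eq_one, aug_single]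
      simp
  have hαq : α ^ p ^ k = 0 := by rw [hpow, hα, zero_pow (pow_ne_zero _ hp.ne_zero), map_zero]
  have hspan : Submodule.span K (Set.range fun i : Fin (p ^ k) => α ^ (i : ℕ)) = ⊤ := by
    rw [eq_top_iff]
    intro x _
    obtain ⟨c, s, hs⟩ := exists_expansion hgen (p ^ k) x
    rw [hαq, mul_zero, add_zero] at hs
    rw [hs]
    exact sum_mem fun i hi => Submodule.smul_mem _ _
      (Submodule.subset_span ⟨⟨i, Finset.mem_range.1 hi⟩, rfl⟩)
  have := Fintype.ofFinite P
  have hdim : Module.finrank K (MonoidAlgebra K P) = Nat.card P := by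
    rw [(coeffLinearEquiv K (S := K) (M := P)).finrank_eq, Module.finrank_finsupp_self,
      Nat.card_eq_fintype_card]
  have hle : Nat.card P ≤ p ^ k := by
    rw [← hdim]
    have := finrank_range_le_card (R := K) fun i : Fin (p ^ k) => α ^ (i : ℕ)
    rwa [Set.finrank, hspan, finrank_top, Fintype.card_fin] at this
  refine IsCyclic.of_exponent_eq_card (le_antisymm ?_ (hk ▸ hle))
  exact Nat.le_of_dvd Nat.card_pos Group.exponent_dvd_nat_card

/-- The powers of the augmentation ideal stabilise at `J = KG αⁿ`, an idempotent ideal, which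
therefore has a left identity `f`. The dimension subgroup of `J` is killed by `1 - f`, which has
augmentation `1`, so it is finite of order prime to `p`; the quotient by it is abelian since `KG / J`
is commutative, and a `p`-group since `J` contains the `n`-th power of the augmentation ideal. -/
theorem exists_normal_of_finite_abelianization (K G : Type*) [Field K] [Group G] (p : ℕ)
    (hp : p.Prime) [CharP K p] [IsPrincipalIdealRing (MonoidAlgebra K G)]
    [Finite (Abelianization G)] :
    ∃ (N : Subgroup G) (_ : N.Normal), Finite N ∧ (Nat.card N : K) ≠ 0 ∧
      Finite (G ⧸ N) ∧ IsCyclic (G ⧸ N) ∧ IsPGroup p (G ⧸ N) := by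
  have := Fact.mk hp
  obtain ⟨α, hα, hgen⟩ := exists_augmentation_generator K G
  obtain ⟨n, s, hn1, hs⟩ : ∃ n s, 1 ≤ n ∧ α ^ n = s * α ^ (n + 1) := by
    obtain ⟨n, s, hs⟩ := exists_pow_eq_mul_pow_succ hα hgen
    exact ⟨n + 1, s, by omega, by rw [pow_succ, hs, mul_assoc, ← pow_succ]⟩
  have hsk : ∀ k, α ^ n = s ^ k * α ^ (n + k) := by
    intro k
    induction k with
    | zero => simp
    | succ k ih =>
      conv_lhs => rw [ih, pow_add, hs]
      rw [pow_succ s, mul_assoc, mul_assoc, ← pow_add, add_right_comm, add_assoc n]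
  have htwo : ∀ t, α ^ n * t ∈ Ideal.span {α ^ n} := pow_mul_mem_span_pow hα hgen n
  have hstable : ∀ w ∈ Ideal.span {α ^ n}, involution w ∈ Ideal.span {α ^ n} := by
    intro w hw
    obtain ⟨u, rfl⟩ := Ideal.mem_span_singleton'.1 hw
    rw [involution_mul, involution_pow]
    exact mul_mem_span_pow hα hgen
      (pow_mem_span_pow hα hgen n (by rw [aug_involution, hα])) _
  have he : s ^ n * α ^ n ∈ Ideal.span {α ^ n} := Ideal.mem_span_singleton'.2 ⟨_, rfl⟩
  have heω : α ^ n = s ^ n * α ^ n * α ^ n := by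
    rw [mul_assoc, ← pow_add]
    exact hsk n
  have : IsNoetherianRing (MonoidAlgebra K G) := inferInstance
  obtain ⟨f, hf, hfid⟩ := exists_left_identity (S := MonoidAlgebra K G) involution
    involution_mul involution_involution htwo hstable he heω
  have hf0 : aug K G f = 0 := by
    obtain ⟨u, rfl⟩ := Ideal.mem_span_singleton'.1 hf
    rw [map_mul, map_pow, hα, zero_pow (by omega), mul_zero]
  obtain ⟨hfin, hcard⟩ := finite_of_mul_eq_self (a := 1 - f) (by simp [hf0])
    (dimensionSubgroup α n) (fun d hd => by
      rw [sub_mul, one_mul, hfid _ (mem_dimensionSubgroup.1 hd), sub_self])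
  have hle := commutator_le_dimensionSubgroup hα hgen n
  set D := dimensionSubgroup α n with hD
  have hnormal : D.Normal := Subgroup.Normal.of_commutator_le _ hle
  have hq : Finite (G ⧸ D) := by
    refine Finite.of_surjective (α := Abelianization G)
      (Quotient.lift (fun g : G => (g : G ⧸ D)) ?_) ?_
    · intro a b hab
      exact QuotientGroup.eq.2 (hle (QuotientGroup.leftRel_apply.1 hab))
    · intro x
      obtain ⟨g, rfl⟩ := QuotientGroup.mk_surjective x
      exact ⟨QuotientGroup.mk g, rfl⟩
  have hpg : IsPGroup p (G ⧸ D) := by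
    intro x
    obtain ⟨g, rfl⟩ := QuotientGroup.mk_surjective x
    -- `p ^ n ≥ n`, so the Frobenius power `(g - 1) ^ p ^ n` lies in `KG αⁿ`.
    refine ⟨n, ?_⟩
    rw [← QuotientGroup.mk_pow, QuotientGroup.eq_one_iff, hD, mem_dimensionSubgroup]
    have : CharP (MonoidAlgebra K G) p := charP_of_injective_algebraMap
      (algebraMap K (MonoidAlgebra K G)).injective p
    have e : of K G (g ^ p ^ n) - 1 = (of K G g - 1) ^ p ^ n := by
      rw [sub_pow_char_pow_of_commute _ _ (Commute.one_right _), one_pow, map_pow]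
    rw [e, ← Nat.sub_add_cancel (Nat.lt_pow_self hp.one_lt (n := n)).le, pow_add]
    exact Ideal.mul_mem_left _ _ (pow_mem_span_pow hα hgen n (by simp))
  refine ⟨D, hnormal, hfin, hcard, hq, ?_, hpg⟩
  have hcomm : ∀ x y : G ⧸ D, x * y = y * x := by
    intro x y
    obtain ⟨a, rfl⟩ := QuotientGroup.mk_surjective x
    obtain ⟨b, rfl⟩ := QuotientGroup.mk_surjective y
    rw [← QuotientGroup.mk_mul, ← QuotientGroup.mk_mul, QuotientGroup.eq]
    refine hle ?_
    have e : (a * b)⁻¹ * (b * a) = ⁅b⁻¹, a⁻¹⁆ := by rw [commutatorElement_def]; group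
    rw [e]
    exact Subgroup.commutator_mem_commutator (Subgroup.mem_top _) (Subgroup.mem_top _)
  have hpir : IsPrincipalIdealRing (MonoidAlgebra K (G ⧸ D)) :=
    IsPrincipalIdealRing.of_surjective (mapDomainRingHom K (QuotientGroup.mk' D))
      (mapDomainRingHom_surjective (QuotientGroup.mk'_surjective D))
  let _ : CommGroup (G ⧸ D) := { (inferInstance : Group (G ⧸ D)) with mul_comm := hcomm }
  exact isCyclic_of_isPGroup K (G ⧸ D) p hp hpg

end GroupAlgebra

/-! ### The characterization -/

/-- Let `K` be a field of characteristic `p > 0` and `G` a group.  Then the group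
algebra `KG` is a principal ideal ring if and only if there exists a finite normal
subgroup `N` of `G` whose order is not divisible by `p`, such that `G/N` is either a
finite cyclic `p`-group or infinite cyclic. -/
theorem monoidAlgebra_isPrincipalIdealRing_iff_char_p
    (K G : Type*) [Field K] [Group G] (p : ℕ) (hp : p.Prime) [CharP K p] :
    IsPrincipalIdealRing (MonoidAlgebra K G) ↔
      ∃ (N : Subgroup G) (_ : N.Normal), Finite N ∧ ¬ p ∣ Nat.card N ∧
        ((Finite (G ⧸ N) ∧ IsCyclic (G ⧸ N) ∧ IsPGroup p (G ⧸ N)) ∨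
          Nonempty ((G ⧸ N) ≃* Multiplicative ℤ)) := by
  constructor
  · intro h
    rcases surjective_int_or_finite_abelianization K G with ⟨φ, hφ⟩ | hfin
    · obtain ⟨hN, hcard⟩ := finite_ker_of_surjective (K := K) φ hφ
      exact ⟨φ.ker, inferInstance, hN, fun hd => hcard ((CharP.cast_eq_zero_iff K p _).2 hd),
        Or.inr ⟨QuotientGroup.quotientKerEquivOfSurjective φ hφ⟩⟩
    · obtain ⟨N, hNn, hN, hcard, hq⟩ := exists_normal_of_finite_abelianization K G p hp
      exact ⟨N, hNn, hN, fun hd => hcard ((CharP.cast_eq_zero_iff K p _).2 hd), Or.inl hq⟩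
  · rintro ⟨N, hNn, hN, hcard, hq⟩
    have hcyc : IsCyclic (G ⧸ N) := by
      rcases hq with ⟨-, h, -⟩ | ⟨⟨e⟩⟩
      · exact h
      · exact isCyclic_of_surjective e.symm e.symm.surjective
    exact isPrincipalIdealRing_of_cyclic_quotient N
      fun h => hcard ((CharP.cast_eq_zero_iff K p _).1 h)
end

section
/- Let F be a field of characteristic p > 0 and r a natural number. The truncated polynomial ring F[X_1, …, X_r]/(X_1^p, …, X_r^p) is a principal ideal ring if and only if r ≤ 1. -/
/-!
If `r ≤ 1`, the polynomial ring in `r` variables is `F` or `F[X]`, hence a principal ideal ring, and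
so is each of its quotients.

If `r ≥ 2`, the ideal generated by the classes of two distinct variables is not principal. This is
seen on the cotangent space: since `p ≥ 2`, sending `X₀ ↦ (1, 0)`, `X₁ ↦ (0, 1)` and the other
variables to `0` defines a homomorphism from the truncated polynomial ring to the square-zero
extension `F ⊕ F²`. A generator of `(x₀, x₁)` would be sent to a single vector `v ∈ F²`, and both
`(1, 0)` and `(0, 1)` would be scalar multiples of `v`.
-/

theorem isPrincipalIdealRing_mvPolynomial_of_le_one
    (F : Type*) [Field F] (r : ℕ) (hr : r ≤ 1) :
    IsPrincipalIdealRing (MvPolynomial (Fin r) F) := by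
  interval_cases r
  · exact IsPrincipalIdealRing.of_surjective
      (MvPolynomial.isEmptyAlgEquiv F (Fin 0)).symm.toRingEquiv
      (MvPolynomial.isEmptyAlgEquiv F (Fin 0)).symm.surjective
  · exact IsPrincipalIdealRing.of_surjective
      (MvPolynomial.uniqueAlgEquiv F (Fin 1)).symm.toRingEquiv
      (MvPolynomial.uniqueAlgEquiv F (Fin 1)).symm.surjective

/-- A commutative ring with a homomorphism to the square-zero extension `F ⊕ F²` whose image
contains both basis vectors of `F²` is not a principal ideal ring. -/
theorem not_isPrincipalIdealRing_of_trivSqZeroExt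
    {F R : Type*} [Field F] [CommRing R] (φ : R →+* TrivSqZeroExt F (F × F)) (x y : R)
    (hx : φ x = TrivSqZeroExt.inr (1, 0)) (hy : φ y = TrivSqZeroExt.inr (0, 1)) :
    ¬ IsPrincipalIdealRing R := by
  intro h
  obtain ⟨f, hf⟩ := (h.principal (Ideal.span {x, y})).principal
  have hfm : f ∈ Ideal.span {x, y} := by
    rw [hf]
    exact Submodule.mem_span_singleton_self f
  have hxm : x ∈ Ideal.span {x, y} := Ideal.subset_span (by simp)
  have hym : y ∈ Ideal.span {x, y} := Ideal.subset_span (by simp)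
  rw [hf] at hxm hym
  obtain ⟨a, ha⟩ := Submodule.mem_span_singleton.1 hxm
  obtain ⟨b, hb⟩ := Submodule.mem_span_singleton.1 hym
  obtain ⟨c, d, hcd⟩ := Ideal.mem_span_pair.1 hfm
  have hfst : (φ f).fst = 0 := by
    rw [← hcd]
    simp [hx, hy]
  have h1 := congrArg (fun z => (φ z).snd) ha
  have h2 := congrArg (fun z => (φ z).snd) hb
  simp only [smul_eq_mul, map_mul, TrivSqZeroExt.snd_mul, hfst, hx, hy, TrivSqZeroExt.snd_inr,
    MulOpposite.op_zero, zero_smul, add_zero, Prod.ext_iff, Prod.smul_fst, Prod.smul_snd] at h1 h2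
  obtain ⟨h11, h12⟩ := h1
  obtain ⟨-, h22⟩ := h2
  -- The scalar `(φ a).fst` is nonzero by `h11`, so `h12` forces the second coordinate of the
  -- common vector to vanish, against `(0, 1)` being a multiple of it.
  grind

/-- Let `F` be a field of characteristic `p > 0` and `r` a natural number.  The
truncated polynomial ring `F[X_1, …, X_r]/(X_1^p, …, X_r^p)` is a principal ideal ring
if and only if `r ≤ 1`. -/
theorem truncatedPolynomialRing_isPrincipalIdealRing_iff
    (F : Type*) [Field F] (p : ℕ) (hp : p.Prime) [CharP F p] (r : ℕ) :
    IsPrincipalIdealRing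
        (MvPolynomial (Fin r) F ⧸
          Ideal.span (Set.range fun i : Fin r => (MvPolynomial.X i : MvPolynomial (Fin r) F) ^ p))
      ↔ r ≤ 1 := by
  constructor
  · intro h
    by_contra! hr
    let v : Fin r → F × F := fun i => (if i.1 = 0 then 1 else 0, if i.1 = 1 then 1 else 0)
    let ψ : MvPolynomial (Fin r) F →ₐ[F] TrivSqZeroExt F (F × F) :=
      MvPolynomial.aeval fun i => TrivSqZeroExt.inr (v i)
    have hψ : ∀ a ∈ Ideal.span (Set.range fun i : Fin r =>
        (MvPolynomial.X i : MvPolynomial (Fin r) F) ^ p), ψ.toRingHom a = 0 := by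
      intro a ha
      refine (Ideal.span_le (I := RingHom.ker ψ.toRingHom)).2 ?_ ha
      rintro _ ⟨i, rfl⟩
      obtain ⟨k, rfl⟩ := Nat.exists_eq_add_of_le hp.two_le
      simp [ψ, RingHom.mem_ker, pow_add, pow_two]
    refine not_isPrincipalIdealRing_of_trivSqZeroExt (Ideal.Quotient.lift _ ψ.toRingHom hψ)
      (Ideal.Quotient.mk _ (MvPolynomial.X ⟨0, by lia⟩))
      (Ideal.Quotient.mk _ (MvPolynomial.X ⟨1, hr⟩)) ?_ ?_ h
    · simp [ψ, v]
    · simp [ψ, v]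
  · intro hr
    have := isPrincipalIdealRing_mvPolynomial_of_le_one F r hr
    exact IsPrincipalIdealRing.of_surjective _ Ideal.Quotient.mk_surjective
end

section
/- Let L be a Lie algebra over a field K which is finitely generated as a Lie algebra, and suppose that for every x ∈ L the subspace [L, x] = {⁅y, x⁆ : y ∈ L} is finite-dimensional. Then the quotient L/Z(L) of L by its center is finite-dimensional. -/
/-!
If `S` generates `L`, the center is the common kernel of the maps `y ↦ ⁅y, s⁆`, `s ∈ S`, since the
centralizer of an element is a Lie subalgebra. For finite `S`, this embeds `L/Z(L)` into the finite
product of the finite-dimensional spaces `[L, s]`.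
-/

/-- The centralizer of `y` is a Lie subalgebra (by the Jacobi identity), so it is all of `L` as soon
as it contains a generating set. -/
theorem mem_center_of_lie_generators_eq_zero
    {K L : Type*} [Field K] [LieRing L] [LieAlgebra K L] {S : Set L}
    (hS : LieSubalgebra.lieSpan K L S = ⊤) {y : L} (hy : ∀ s ∈ S, ⁅y, s⁆ = 0) :
    y ∈ LieAlgebra.center K L := by
  rw [LieModule.mem_maxTrivSubmodule]
  intro x
  have hx : x ∈ LieSubalgebra.lieSpan K L S := hS ▸ LieSubalgebra.mem_top x
  have key : ⁅y, x⁆ = 0 := by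
    induction hx using LieSubalgebra.lieSpan_induction with
    | mem s hs => exact hy s hs
    | zero => exact lie_zero y
    | add a b _ _ ha hb => rw [lie_add, ha, hb, add_zero]
    | smul c a _ ha => rw [lie_smul, ha, smul_zero]
    | lie a b _ _ ha hb => rw [leibniz_lie, ha, hb, zero_lie, lie_zero, add_zero]
  rw [← lie_skew, key, neg_zero]

/-- Let `L` be a Lie algebra over a field `K` which is finitely generated as a Lie
algebra, and suppose that for every `x ∈ L` the subspace `[L, x]` (the span of all
brackets `⁅y, x⁆` with `y ∈ L`) is finite-dimensional.  Then the quotient `L/Z(L)` of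
`L` by its center is finite-dimensional. -/
theorem quotient_center_finiteDimensional_of_fg
    (K L : Type*) [Field K] [LieRing L] [LieAlgebra K L]
    (hfg : ∃ S : Finset L, LieSubalgebra.lieSpan K L ↑S = ⊤)
    (had : ∀ x : L,
      FiniteDimensional K (Submodule.span K (Set.range fun y : L => ⁅y, x⁆))) :
    FiniteDimensional K (L ⧸ LieAlgebra.center K L) := by
  obtain ⟨S, hS⟩ := hfg
  let φ : L →ₗ[K] ((s : S) →
      Submodule.span K (Set.range fun y : L => ⁅y, (s : L)⁆)) :=
    LinearMap.pi fun s =>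
      { toFun := fun y => ⟨⁅y, (s : L)⁆, Submodule.subset_span ⟨y, rfl⟩⟩
        map_add' := fun a b => Subtype.ext (add_lie a b (s : L))
        map_smul' := fun c a => Subtype.ext (smul_lie c a (s : L)) }
  have hle : (LieAlgebra.center K L).toSubmodule ≤ LinearMap.ker φ := by
    intro y hy
    rw [LinearMap.mem_ker]
    funext s
    apply Subtype.ext
    change ⁅y, (s : L)⁆ = 0
    rw [← lie_skew, (LieModule.mem_maxTrivSubmodule K L L y).1 hy s, neg_zero]
  have hge : LinearMap.ker φ ≤ (LieAlgebra.center K L).toSubmodule := by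
    intro y hy
    refine mem_center_of_lie_generators_eq_zero hS fun s hs => ?_
    exact congrArg Subtype.val (congrFun (LinearMap.mem_ker.1 hy) ⟨s, hs⟩)
  haveI := fun s : S => had s
  exact FiniteDimensional.of_injective
    ((LieAlgebra.center K L).toSubmodule.liftQ φ hle)
    (LinearMap.ker_eq_bot.1 (Submodule.ker_liftQ_eq_bot _ _ hle hge))
end

section
/- Let L be a Lie algebra over a field K, let S ⊆ L be a subset, and let H be the Lie subalgebra of L generated by S. Then the span of all brackets ⁅y, h⁆ with y ∈ L and h ∈ H is contained in the subspace Σ_{s ∈ S} [L, s]. In particular, if S is finite and each [L, s] is finite-dimensional, then [L, H] is finite-dimensional. -/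
/-!
The Jacobi identity in the form `⁅y, ⁅a, b⁆⁆ = ⁅⁅y, a⁆, b⁆ - ⁅⁅y, b⁆, a⁆` shows that, for a fixed
subspace `W`, the elements `h` with `[L, h] ⊆ W` form a Lie subalgebra. For `W = Σ_{s ∈ S} [L, s]`
this subalgebra contains `S`, hence all of the Lie subalgebra generated by `S`. A finite sum of
finite-dimensional subspaces is finite-dimensional, which gives the second claim.
-/

/-- Let `L` be a Lie algebra over a field `K`, let `S ⊆ L` be a subset and let `H` be
the Lie subalgebra of `L` generated by `S`.  Then the span of all brackets `⁅y, h⁆`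
with `y ∈ L` and `h ∈ H` is contained in the subspace `Σ_{s ∈ S} [L, s]`.  In
particular, if `S` is finite and each `[L, s]` is finite-dimensional, then `[L, H]` is
finite-dimensional. -/
theorem span_brackets_lieSpan_le_sum
    (K L : Type*) [Field K] [LieRing L] [LieAlgebra K L] (S : Set L) :
    (Submodule.span K
        {x : L | ∃ y : L, ∃ h ∈ LieSubalgebra.lieSpan K L S, x = ⁅y, h⁆} ≤
      ⨆ s ∈ S, Submodule.span K (Set.range fun y : L => ⁅y, s⁆)) ∧
    (S.Finite →
      (∀ s ∈ S, FiniteDimensional K (Submodule.span K (Set.range fun y : L => ⁅y, s⁆))) →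
      FiniteDimensional K (Submodule.span K
        {x : L | ∃ y : L, ∃ h ∈ LieSubalgebra.lieSpan K L S, x = ⁅y, h⁆})) := by
  have key : Submodule.span K
        {x : L | ∃ y : L, ∃ h ∈ LieSubalgebra.lieSpan K L S, x = ⁅y, h⁆} ≤
      ⨆ s ∈ S, Submodule.span K (Set.range fun y : L => ⁅y, s⁆) := by
    rw [Submodule.span_le]
    rintro _ ⟨y, h, hh, rfl⟩
    rw [SetLike.mem_coe]
    induction hh using LieSubalgebra.lieSpan_induction generalizing y with
    | mem s hs =>
      exact Submodule.mem_iSup_of_mem s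
        (Submodule.mem_iSup_of_mem hs (Submodule.subset_span ⟨y, rfl⟩))
    | zero => simp
    | add a b _ _ iha ihb =>
      rw [lie_add]
      exact add_mem (iha y) (ihb y)
    | smul t a _ iha =>
      rw [lie_smul]
      exact Submodule.smul_mem _ t (iha y)
    | lie a b _ _ iha ihb =>
      rw [leibniz_lie, ← lie_skew a, ← sub_eq_add_neg]
      exact sub_mem (ihb ⁅y, a⁆) (iha ⁅y, b⁆)
  refine ⟨key, fun hS hfin => ?_⟩
  have : Finite S := hS
  have (s : S) : FiniteDimensional K (Submodule.span K (Set.range fun y : L => ⁅y, (s : L)⁆)) :=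
    hfin s s.2
  rw [iSup_subtype'] at key
  exact Submodule.finiteDimensional_of_le key
end
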